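/- arXiv:1810.01383 — 4 statements merged into one kernel-verified Lean document; each statement's English description precedes it below -/
import Mathlib

section
/- Let s : S ↣ I and t : T ↣ I be subunits in a braided monoidal category C. Then s factors through t (i.e. s ≤ t as subobjects of I) if and only if id_S ⊗ t : S ⊗ T → S ⊗ I is an isomorphism, and this holds if and only if t ⊗ id_S : T ⊗ S → I ⊗ S is an isomorphism. -/
/-!
If `s = f ≫ t`, then `f ▷ S ≫ t ▷ S = s ▷ S` is invertible, so `t ▷ S` has a section and `S` is a
retract of `T ⊗ S`. Hence `t ▷ S` is a retract of `t ▷ (T ⊗ S)`, which is invertible because `t ▷ T`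
is, and retracts of isomorphisms are isomorphisms. Conversely, a section of `t ▷ S` gives
`S ≅ 𝟙 ⊗ S ⟶ T ⊗ S ⟶ T ⊗ 𝟙 ≅ T`, the second arrow being `T ◁ s`, and this factors `s` through `t`
by the exchange law. Naturality of the braiding makes `S ◁ s` and `T ◁ t` invertible as well, so the
mirrored argument applies to `S ◁ t`.
-/

open CategoryTheory MonoidalCategory

lemma isIso_app_of_retract {C D : Type*} [Category C] [Category D] {F G : C ⥤ D} (τ : F ⟶ G)
    {X Y : C} (h : Retract X Y) [IsIso (τ.app Y)] : IsIso (τ.app X) :=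
  MorphismProperty.of_retract (P := .isomorphisms D) (τ.retractArrowApp h) ‹_›

section Monoidal

variable {C : Type*} [Category C] [MonoidalCategory C]

lemma isIso_whiskerRight_of_retract {T U X Y : C} (t : T ⟶ U) (h : Retract X Y)
    [IsIso (t ▷ Y)] : IsIso (t ▷ X) :=
  have : IsIso (((curriedTensor C).map t).app Y) := ‹IsIso (t ▷ Y)›
  isIso_app_of_retract ((curriedTensor C).map t) h

lemma isIso_whiskerLeft_of_retract {T U X Y : C} (t : T ⟶ U) (h : Retract X Y)
    [IsIso (Y ◁ t)] : IsIso (X ◁ t) :=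
  have : IsIso (((curriedTensor C).flip.map t).app Y) := ‹IsIso (Y ◁ t)›
  isIso_app_of_retract ((curriedTensor C).flip.map t) h

variable {S T : C} (s : S ⟶ 𝟙_ C) (t : T ⟶ 𝟙_ C)

lemma isSplitEpi_whiskerRight_iff_isIso (X : C) [IsIso (t ▷ T)] :
    IsSplitEpi (t ▷ X) ↔ IsIso (t ▷ X) := by
  refine ⟨fun _ ↦ ?_, fun _ ↦ inferInstance⟩
  have retract : Retract (𝟙_ C ⊗ X) (T ⊗ X) := ⟨section_ (t ▷ X), t ▷ X, IsSplitEpi.id _⟩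
  have : IsIso (t ▷ (T ⊗ X)) := by
    rw [whiskerRight_tensor]
    infer_instance
  exact isIso_whiskerRight_of_retract t ((λ_ X).symm.retract.trans retract)

lemma isSplitEpi_whiskerLeft_iff_isIso (X : C) [IsIso (T ◁ t)] :
    IsSplitEpi (X ◁ t) ↔ IsIso (X ◁ t) := by
  refine ⟨fun _ ↦ ?_, fun _ ↦ inferInstance⟩
  have retract : Retract (X ⊗ 𝟙_ C) (X ⊗ T) := ⟨section_ (X ◁ t), X ◁ t, IsSplitEpi.id _⟩
  have : IsIso ((X ⊗ T) ◁ t) := by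
    rw [tensor_whiskerLeft]
    infer_instance
  exact isIso_whiskerLeft_of_retract t ((ρ_ X).symm.retract.trans retract)

lemma exists_comp_eq_iff_isSplitEpi_whiskerRight [IsSplitEpi (s ▷ S)] :
    (∃ f : S ⟶ T, f ≫ t = s) ↔ IsSplitEpi (t ▷ S) := by
  constructor
  · rintro ⟨f, hf⟩
    have fac : f ▷ S ≫ t ▷ S = s ▷ S := by rw [← comp_whiskerRight, hf]
    exact .mk' ⟨section_ (s ▷ S) ≫ f ▷ S, by rw [Category.assoc, fac, IsSplitEpi.id]⟩
  · intro _
    refine ⟨(λ_ S).inv ≫ section_ (t ▷ S) ≫ T ◁ s ≫ (ρ_ T).hom, ?_⟩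
    calc ((λ_ S).inv ≫ section_ (t ▷ S) ≫ T ◁ s ≫ (ρ_ T).hom) ≫ t
      _ = (λ_ S).inv ≫ section_ (t ▷ S) ≫ (T ◁ s ≫ t ▷ 𝟙_ C) ≫ (ρ_ (𝟙_ C)).hom := by
        simp only [Category.assoc, rightUnitor_naturality]
      _ = (λ_ S).inv ≫ (section_ (t ▷ S) ≫ t ▷ S) ≫ 𝟙_ C ◁ s ≫ (λ_ (𝟙_ C)).hom := by
        simp only [Category.assoc, whisker_exchange, unitors_equal]
      _ = s := by
        rw [IsSplitEpi.id, Category.id_comp, leftUnitor_naturality, Iso.inv_hom_id_assoc]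

lemma exists_comp_eq_iff_isSplitEpi_whiskerLeft [IsSplitEpi (S ◁ s)] :
    (∃ f : S ⟶ T, f ≫ t = s) ↔ IsSplitEpi (S ◁ t) := by
  constructor
  · rintro ⟨f, hf⟩
    have fac : S ◁ f ≫ S ◁ t = S ◁ s := by rw [← whiskerLeft_comp, hf]
    exact .mk' ⟨section_ (S ◁ s) ≫ S ◁ f, by rw [Category.assoc, fac, IsSplitEpi.id]⟩
  · intro _
    refine ⟨(ρ_ S).inv ≫ section_ (S ◁ t) ≫ s ▷ T ≫ (λ_ T).hom, ?_⟩
    calc ((ρ_ S).inv ≫ section_ (S ◁ t) ≫ s ▷ T ≫ (λ_ T).hom) ≫ t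
      _ = (ρ_ S).inv ≫ section_ (S ◁ t) ≫ (s ▷ T ≫ 𝟙_ C ◁ t) ≫ (λ_ (𝟙_ C)).hom := by
        simp only [Category.assoc, leftUnitor_naturality]
      _ = (ρ_ S).inv ≫ (section_ (S ◁ t) ≫ S ◁ t) ≫ s ▷ 𝟙_ C ≫ (ρ_ (𝟙_ C)).hom := by
        simp only [Category.assoc, ← whisker_exchange_assoc, unitors_equal]
      _ = s := by
        rw [IsSplitEpi.id, Category.id_comp, rightUnitor_naturality, Iso.inv_hom_id_assoc]

theorem stmt1_general [IsSplitEpi (S ◁ s)] [IsSplitEpi (s ▷ S)] [IsIso (T ◁ t)] [IsIso (t ▷ T)] :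
    ((∃ f : S ⟶ T, f ≫ t = s) ↔ IsIso (S ◁ t)) ∧
      (IsIso (S ◁ t) ↔ IsIso (t ▷ S)) := by
  have left : (∃ f : S ⟶ T, f ≫ t = s) ↔ IsIso (S ◁ t) :=
    (exists_comp_eq_iff_isSplitEpi_whiskerLeft s t).trans (isSplitEpi_whiskerLeft_iff_isIso t S)
  have right : (∃ f : S ⟶ T, f ≫ t = s) ↔ IsIso (t ▷ S) :=
    (exists_comp_eq_iff_isSplitEpi_whiskerRight s t).trans (isSplitEpi_whiskerRight_iff_isIso t S)
  exact ⟨left, left.symm.trans right⟩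

end Monoidal

lemma isIso_whiskerLeft_iff_isIso_whiskerRight {C : Type*} [Category C] [MonoidalCategory C]
    [BraidedCategory C] (S : C) {T U : C} (t : T ⟶ U) : IsIso (S ◁ t) ↔ IsIso (t ▷ S) :=
  (MorphismProperty.isomorphisms C).arrow_mk_iso_iff
    (Arrow.isoMk (β_ S T) (β_ S U) (BraidedCategory.braiding_naturality_right S t).symm)

/-- Lemma 2.3 of "Tensor topology": a subunit `s` factors through a subunit `t`
iff `S ⊗ t` is invertible, iff `t ⊗ S` is invertible. -/
theorem stmt1 {C : Type*} [Category C] [MonoidalCategory C] [BraidedCategory C]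
    {S T : C} (s : S ⟶ 𝟙_ C) (t : T ⟶ 𝟙_ C) [Mono s] [Mono t]
    (hs : IsIso (s ▷ S)) (ht : IsIso (t ▷ T)) :
    ((∃ f : S ⟶ T, f ≫ t = s) ↔ IsIso (S ◁ t)) ∧
      (IsIso (S ◁ t) ↔ IsIso (t ▷ S)) := by
  have : IsIso (S ◁ s) := (isIso_whiskerLeft_iff_isIso_whiskerRight S s).2 hs
  have : IsIso (T ◁ t) := (isIso_whiskerLeft_iff_isIso_whiskerRight T t).2 ht
  exact stmt1_general s t
end

section
/- Let s : S ↣ I be a subunit in a braided monoidal category C. Then the endofunctor F(A) = S ⊗ A carries a comonad structure with counit ε_A = λ_A ∘ (s ⊗ id_A) : S ⊗ A → A and comultiplication δ_A = (λ_{S⊗A} ∘ (s ⊗ id_{S⊗A}))⁻¹ : S ⊗ A → S ⊗ (S ⊗ A); moreover the comultiplication δ is a natural isomorphism, and the component ε_I : S ⊗ I → I of the counit is a monomorphism. -/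
open CategoryTheory MonoidalCategory

/-!
The crux is that the counit `ε` satisfies `εF = Fε`. At the unit object this says that the two maps
`S ⊗ S ⟶ S` applying `s` to one factor agree, which may be tested after composing with the
monomorphism `s`, where both become `s ⊗ s`; tensoring with `A` gives the general case. Now `εF` is
invertible because `s ▷ S` is, and for any copointed endofunctor with `εF = Fε` invertible the
inverse of `εF` is a comultiplication: `Fδ` and `δF` are both inverse to `εFF = FεF`.
-/

section WellCopointed

variable {C : Type*} [Category C] {F : C ⥤ C} {ε : F ⟶ 𝟭 C}

/-- A copointed endofunctor `(F, ε)` is *well-copointed* if the natural transformations `εF` and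
`Fε` from `F²` to `F` coincide. The equality is stated componentwise, since `F ⋙ 𝟭 C` and
`𝟭 C ⋙ F` are not syntactically the same functor. -/
def IsWellCopointed (ε : F ⟶ 𝟭 C) : Prop :=
  ∀ A : C, ε.app (F.obj A) = F.map (ε.app A)

/-- The inverse of `εF`, as a natural transformation from `F` to `F²`: the candidate
comultiplication on `F`. -/
noncomputable def invCounit (ε : F ⟶ 𝟭 C) [∀ A, IsIso (ε.app (F.obj A))] : F ⟶ F ⋙ F where
  app A := inv (ε.app (F.obj A))
  naturality A B f := by
    rw [IsIso.comp_inv_eq, Category.assoc, IsIso.eq_inv_comp]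
    exact (ε.naturality (F.map f)).symm

namespace IsWellCopointed

theorem inv_comp_map_counit (h : IsWellCopointed ε) (A : C) [IsIso (ε.app (F.obj A))] :
    inv (ε.app (F.obj A)) ≫ F.map (ε.app A) = 𝟙 (F.obj A) := by
  rw [← h A]
  exact IsIso.inv_hom_id (ε.app (F.obj A))

theorem map_inv_eq_inv (h : IsWellCopointed ε) (A : C) [IsIso (ε.app (F.obj A))]
    [IsIso (ε.app (F.obj (F.obj A)))] :
    F.map (inv (ε.app (F.obj A))) = inv (ε.app (F.obj (F.obj A))) := by
  apply IsIso.eq_inv_of_hom_inv_id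
  rw [h (F.obj A), ← F.map_comp, IsIso.hom_inv_id, F.map_id]

/-- The (idempotent) comonad on a well-copointed endofunctor `(F, ε)` for which `εF` is
invertible; its comultiplication is `(εF)⁻¹`. -/
noncomputable def comonad (h : IsWellCopointed ε) [∀ A, IsIso (ε.app (F.obj A))] : Comonad C where
  toFunctor := F
  ε := ε
  δ := invCounit ε
  coassoc A := congrArg (inv (ε.app (F.obj A)) ≫ ·) (h.map_inv_eq_inv A)
  left_counit A := IsIso.inv_hom_id (ε.app (F.obj A))
  right_counit A := h.inv_comp_map_counit A

theorem counit_comp_comonad_δ (h : IsWellCopointed ε) [∀ A, IsIso (ε.app (F.obj A))] (A : C) :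
    ε.app (F.obj A) ≫ h.comonad.δ.app A = 𝟙 (F.obj (F.obj A)) :=
  IsIso.hom_inv_id (ε.app (F.obj A))

end IsWellCopointed

end WellCopointed

section TensorLeft

variable {C : Type*} [Category C] [MonoidalCategory C]

instance isIso_whiskerRight_tensor {X Y Z : C} (f : X ⟶ Y) [IsIso (f ▷ Z)] (A : C) :
    IsIso (f ▷ (Z ⊗ A)) := by
  rw [whiskerRight_tensor]
  infer_instance

theorem whiskerRight_leftUnitor_comp_eq {S T : C} (s : S ⟶ 𝟙_ C) (t : T ⟶ 𝟙_ C) :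
    (s ▷ T ≫ (λ_ T).hom) ≫ t = (S ◁ t ≫ (ρ_ S).hom) ≫ s := by
  rw [Category.assoc, Category.assoc, ← leftUnitor_naturality, ← rightUnitor_naturality,
    ← whisker_exchange_assoc, unitors_equal]

variable {S : C} (s : S ⟶ 𝟙_ C)

theorem whiskerRight_leftUnitor_eq_whiskerLeft_rightUnitor [Mono s] :
    s ▷ S ≫ (λ_ S).hom = S ◁ s ≫ (ρ_ S).hom :=
  (cancel_mono s).1 (whiskerRight_leftUnitor_comp_eq s s)

theorem mono_whiskerRight_unit_leftUnitor [Mono s] : Mono (s ▷ 𝟙_ C ≫ (λ_ (𝟙_ C)).hom) := by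
  rw [unitors_equal, rightUnitor_naturality]
  infer_instance

/-- The copointing `S ⊗ A ⟶ A` of the endofunctor `S ⊗ -` induced by a morphism `s : S ⟶ 𝟙_ C`;
it is the counit of the comonad when `s` is a subunit. -/
def tensorLeftCounit : tensorLeft S ⟶ 𝟭 C where
  app A := s ▷ A ≫ (λ_ A).hom
  naturality A B f := by simp [whisker_exchange_assoc]

theorem isWellCopointed_tensorLeftCounit [Mono s] : IsWellCopointed (tensorLeftCounit s) := by
  intro A
  calc s ▷ (S ⊗ A) ≫ (λ_ (S ⊗ A)).hom
    _ = (α_ S S A).inv ≫ (s ▷ S ≫ (λ_ S).hom) ▷ A := by simp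
    _ = (α_ S S A).inv ≫ (S ◁ s ≫ (ρ_ S).hom) ▷ A := by
      rw [whiskerRight_leftUnitor_eq_whiskerLeft_rightUnitor]
    _ = S ◁ (s ▷ A ≫ (λ_ A).hom) := by simp

instance isIso_tensorLeftCounit_app [IsIso (s ▷ S)] (A : C) :
    IsIso ((tensorLeftCounit s).app ((tensorLeft S).obj A)) :=
  inferInstanceAs (IsIso (s ▷ (S ⊗ A) ≫ (λ_ (S ⊗ A)).hom))

/-- The comonad `S ⊗ -` of a subunit `s : S ⟶ 𝟙_ C`, that is, of a monomorphism `s` such that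
`s ▷ S` is invertible. -/
noncomputable def subunitComonad [Mono s] [IsIso (s ▷ S)] : Comonad C :=
  (isWellCopointed_tensorLeftCounit s).comonad

end TensorLeft

theorem stmt10_general {C : Type*} [Category C] [MonoidalCategory C]
    {S : C} (s : S ⟶ 𝟙_ C) [Mono s] (hs : IsIso (s ▷ S)) :
    (∀ {A B : C} (f : A ⟶ B),
      (S ◁ f) ≫ (s ▷ B) ≫ (λ_ B).hom = ((s ▷ A) ≫ (λ_ A).hom) ≫ f) ∧
    (∃ δ : ∀ A : C, S ⊗ A ⟶ S ⊗ (S ⊗ A),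
      (∀ A : C, δ A ≫ (s ▷ (S ⊗ A)) ≫ (λ_ (S ⊗ A)).hom = 𝟙 (S ⊗ A)) ∧
      (∀ A : C, ((s ▷ (S ⊗ A)) ≫ (λ_ (S ⊗ A)).hom) ≫ δ A = 𝟙 (S ⊗ (S ⊗ A))) ∧
      (∀ {A B : C} (f : A ⟶ B), (S ◁ f) ≫ δ B = δ A ≫ (S ◁ (S ◁ f))) ∧
      (∀ A : C, δ A ≫ (S ◁ ((s ▷ A) ≫ (λ_ A).hom)) = 𝟙 (S ⊗ A)) ∧
      (∀ A : C, δ A ≫ (S ◁ δ A) = δ A ≫ δ (S ⊗ A))) ∧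
    Mono ((s ▷ 𝟙_ C) ≫ (λ_ (𝟙_ C)).hom) := by
  let G := subunitComonad s
  exact ⟨fun f => G.ε.naturality f,
    ⟨G.δ.app, G.left_counit, (isWellCopointed_tensorLeftCounit s).counit_comp_comonad_δ,
      fun f => G.δ.naturality f, G.right_counit, G.coassoc⟩,
    mono_whiskerRight_unit_leftUnitor s⟩

/-- Proposition 4.9 of "Tensor topology" (one direction): a subunit `s : S ↣ I` makes
the endofunctor `A ↦ S ⊗ A` a comonad whose counit `ε_A = λ_A ∘ (s ⊗ id_A)` is natural,
whose comultiplication `δ_A = (λ_{S⊗A} ∘ (s ⊗ id_{S⊗A}))⁻¹` is a natural isomorphism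
(expressed as a two-sided inverse), satisfying the counit and coassociativity laws,
and whose counit component `ε_I` is a monomorphism. -/
theorem stmt10 {C : Type*} [Category C] [MonoidalCategory C] [BraidedCategory C]
    {S : C} (s : S ⟶ 𝟙_ C) [Mono s] (hs : IsIso (s ▷ S)) :
    -- naturality of the counit ε
    (∀ {A B : C} (f : A ⟶ B),
      (S ◁ f) ≫ (s ▷ B) ≫ (λ_ B).hom = ((s ▷ A) ≫ (λ_ A).hom) ≫ f) ∧
    -- the comultiplication: inverse of ε at S ⊗ A, natural, counital, coassociative
    (∃ δ : ∀ A : C, S ⊗ A ⟶ S ⊗ (S ⊗ A),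
      (∀ A : C, δ A ≫ (s ▷ (S ⊗ A)) ≫ (λ_ (S ⊗ A)).hom = 𝟙 (S ⊗ A)) ∧
      (∀ A : C, ((s ▷ (S ⊗ A)) ≫ (λ_ (S ⊗ A)).hom) ≫ δ A = 𝟙 (S ⊗ (S ⊗ A))) ∧
      (∀ {A B : C} (f : A ⟶ B), (S ◁ f) ≫ δ B = δ A ≫ (S ◁ (S ◁ f))) ∧
      (∀ A : C, δ A ≫ (S ◁ ((s ▷ A) ≫ (λ_ A).hom)) = 𝟙 (S ⊗ A)) ∧
      (∀ A : C, δ A ≫ (S ◁ δ A) = δ A ≫ δ (S ⊗ A))) ∧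
    -- the counit component at the tensor unit is monic
    Mono ((s ▷ 𝟙_ C) ≫ (λ_ (𝟙_ C)).hom) :=
  stmt10_general s hs
end

section
/- Let C be a firm braided monoidal category, and let Σ be the class of morphisms consisting of all identities together with all morphisms of the form λ_A ∘ (s ⊗ id_A) : S ⊗ A → A for an object A and a subunit s : S ↣ I. Then Σ admits a calculus of right fractions: Σ contains all identities and is closed under composition; for every morphism in Σ of the form λ_C ∘ (s ⊗ id_C) : S ⊗ C → C and every f : B → C there exist a morphism in Σ with target B and a morphism g completing a commutative square (the right Ore condition, witnessed by λ_B ∘ (s ⊗ id_B) : S ⊗ B → B and id_S ⊗ f); and whenever (λ_C ∘ (s ⊗ id_C)) ∘ f' = (λ_C ∘ (s ⊗ id_C)) ∘ g' for parallel morphisms f', g' : B → S ⊗ C, there is a morphism in Σ, namely λ_B ∘ (s ⊗ id_B), with f' ∘ (λ_B ∘ (s ⊗ id_B)) = g' ∘ (λ_B ∘ (s ⊗ id_B)). -/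
/-!
For a monomorphism `s : S ⟶ 𝟙_ C` the two maps `s ▷ S` and `S ◁ s` agree up to unitors, since both
become `s ⊗ s` after composition with `s`; so for a subunit both are invertible.

* Composition: restricting along `t` and then along `s` is restricting along `s ⊗ t`, viewed as a
  map `S ⊗ T ⟶ 𝟙_ C`. Firmness makes this map mono. Whiskering it with `S ⊗ T` gives an isomorphism
  because `s` becomes invertible after whiskering with any object that has a tensor factor `S`, and
  likewise for `t`; the braiding makes the position of the factor irrelevant.
* Ore condition: the square is naturality of the restriction morphisms.
* Cancellation: by naturality, precomposing `f'` with the restriction to `S` factors through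
  `S ◁ f'`, and whiskering with `S` makes the restriction morphism of `s` invertible.
-/

open CategoryTheory MonoidalCategory

/-- A subunit in a braided monoidal category: a monomorphism into the tensor unit
such that `s ▷ S` is invertible. -/
def IsSubunit {C : Type*} [Category C] [MonoidalCategory C] {S : C} (s : S ⟶ 𝟙_ C) : Prop :=
  Mono s ∧ IsIso (s ▷ S)

/-- The class `Σ` of morphisms consisting of all identities together with all morphisms
of the form `λ_A ∘ (s ⊗ id_A) : S ⊗ A ⟶ A` for a subunit `s` (up to the canonical
identification of the source with `S ⊗ A`). -/
def SigmaClass (C : Type*) [Category C] [MonoidalCategory C] [BraidedCategory C] :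
    MorphismProperty C := fun X Y f =>
  (∃ h : X = Y, f = eqToHom h) ∨
  ∃ (S : C) (s : S ⟶ 𝟙_ C) (e : X ≅ S ⊗ Y),
    IsSubunit s ∧ f = e.hom ≫ (s ▷ Y) ≫ (λ_ Y).hom

section Whiskering

variable {C : Type*} [Category C] [MonoidalCategory C]

lemma isIso_whiskerRight_of_iso {X Y A B : C} (f : X ⟶ Y) (e : A ≅ B) [IsIso (f ▷ A)] :
    IsIso (f ▷ B) := by
  have h : X ◁ e.hom ≫ f ▷ B = f ▷ A ≫ Y ◁ e.hom := whisker_exchange f e.hom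
  have : IsIso (X ◁ e.hom ≫ f ▷ B) := h ▸ inferInstance
  exact IsIso.of_isIso_comp_left (X ◁ e.hom) (f ▷ B)

lemma isIso_whiskerRight_tensor_of_left {X Y : C} (f : X ⟶ Y) (A B : C) [IsIso (f ▷ A)] :
    IsIso (f ▷ (A ⊗ B)) := by
  rw [whiskerRight_tensor]
  infer_instance

lemma isIso_whiskerRight_tensor_of_right [BraidedCategory C] {X Y : C} (f : X ⟶ Y) (A B : C)
    [IsIso (f ▷ B)] : IsIso (f ▷ (A ⊗ B)) :=
  have := isIso_whiskerRight_tensor_of_left f B A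
  isIso_whiskerRight_of_iso f (β_ B A)

lemma isIso_whiskerRight_whiskerRight [BraidedCategory C] {X Y : C} (f : X ⟶ Y) (A B : C)
    [IsIso (f ▷ B)] : IsIso (f ▷ A ▷ B) := by
  have := isIso_whiskerRight_tensor_of_right f A B
  rw [whiskerRight_tensor_symm]
  infer_instance

end Whiskering

section Restriction

variable {C : Type*} [Category C] [MonoidalCategory C]

/-- The restriction morphism `λ_A ∘ (s ⊗ id_A) : S ⊗ A ⟶ A` of an object `A` along a morphism
`s : S ⟶ 𝟙_ C`. It is defined for arbitrary `s`, although the elements of `Σ` only use subunits. -/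
def restrictionHom {S : C} (s : S ⟶ 𝟙_ C) (A : C) : S ⊗ A ⟶ A :=
  s ▷ A ≫ (λ_ A).hom

lemma restrictionHom_naturality {S A B : C} (s : S ⟶ 𝟙_ C) (f : A ⟶ B) :
    S ◁ f ≫ restrictionHom s B = restrictionHom s A ≫ f := by
  simp only [restrictionHom, whisker_exchange_assoc, leftUnitor_naturality, Category.assoc]

lemma restrictionHom_comp_restrictionHom {S T : C} (s : S ⟶ 𝟙_ C) (t : T ⟶ 𝟙_ C) (A : C) :
    restrictionHom s (T ⊗ A) ≫ restrictionHom t A =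
      (α_ S T A).inv ≫ restrictionHom (restrictionHom s T ≫ t) A := by
  simp [restrictionHom]

lemma restrictionHom_self_of_mono {S : C} (s : S ⟶ 𝟙_ C) [Mono s] :
    restrictionHom s S = S ◁ s ≫ (ρ_ S).hom := by
  rw [← cancel_mono s, ← restrictionHom_naturality, restrictionHom, Category.assoc,
    unitors_equal, rightUnitor_naturality]

end Restriction

namespace IsSubunit

variable {C : Type*} [Category C] [MonoidalCategory C] {S T : C} {s : S ⟶ 𝟙_ C} {t : T ⟶ 𝟙_ C}

lemma isIso_whiskerLeft (hs : IsSubunit s) : IsIso (S ◁ s) := by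
  obtain ⟨_, _⟩ := hs
  have h : S ◁ s = restrictionHom s S ≫ (ρ_ S).inv := by simp [restrictionHom_self_of_mono]
  rw [h, restrictionHom]
  infer_instance

lemma isIso_whiskerLeft_restrictionHom (hs : IsSubunit s) (A : C) :
    IsIso (S ◁ restrictionHom s A) := by
  have := hs.isIso_whiskerLeft
  rw [restrictionHom, whiskerLeft_comp, whisker_assoc_symm]
  infer_instance

lemma restrictionHom_comp_cancel (hs : IsSubunit s) {A B : C} {f g : B ⟶ S ⊗ A}
    (h : f ≫ restrictionHom s A = g ≫ restrictionHom s A) :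
    restrictionHom s B ≫ f = restrictionHom s B ≫ g := by
  have := hs.isIso_whiskerLeft_restrictionHom A
  have hfg : S ◁ f = S ◁ g := by
    rw [← cancel_mono (S ◁ restrictionHom s A), ← whiskerLeft_comp, ← whiskerLeft_comp, h]
  rw [← restrictionHom_naturality, ← restrictionHom_naturality, hfg]

lemma id : IsSubunit (𝟙 (𝟙_ C)) :=
  ⟨inferInstance, inferInstance⟩

lemma restrictionHom_comp [BraidedCategory C] (hs : IsSubunit s) (ht : IsSubunit t)
    [Mono (s ▷ T)] : IsSubunit (restrictionHom s T ≫ t) := by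
  obtain ⟨_, _⟩ := hs
  obtain ⟨_, _⟩ := ht
  have : IsIso (s ▷ (S ⊗ T)) := isIso_whiskerRight_tensor_of_left s S T
  have : IsIso (s ▷ T ▷ (S ⊗ T)) := isIso_whiskerRight_whiskerRight s T (S ⊗ T)
  have : IsIso (t ▷ (S ⊗ T)) := isIso_whiskerRight_tensor_of_right t S T
  rw [restrictionHom, Category.assoc]
  refine ⟨inferInstance, ?_⟩
  rw [comp_whiskerRight, comp_whiskerRight]
  infer_instance

end IsSubunit

namespace SigmaClass

variable {C : Type*} [Category C] [MonoidalCategory C] [BraidedCategory C]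

-- Identities are absorbed by the second clause of `SigmaClass`, with the subunit `𝟙 (𝟙_ C)`.
lemma iff_exists_restrictionHom {X Y : C} {f : X ⟶ Y} :
    SigmaClass C f ↔ ∃ (S : C) (s : S ⟶ 𝟙_ C) (e : X ≅ S ⊗ Y),
      IsSubunit s ∧ f = e.hom ≫ restrictionHom s Y := by
  refine ⟨?_, Or.inr⟩
  rintro (⟨rfl, rfl⟩ | h)
  · exact ⟨𝟙_ C, 𝟙 _, (λ_ X).symm, IsSubunit.id, by simp [restrictionHom]⟩
  · exact h

lemma of_isSubunit {S : C} {s : S ⟶ 𝟙_ C} (hs : IsSubunit s) (A : C) :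
    SigmaClass C (restrictionHom s A) :=
  iff_exists_restrictionHom.2 ⟨S, s, Iso.refl _, hs, (Category.id_comp _).symm⟩

lemma comp
    (firm : ∀ {S T : C} (s : S ⟶ 𝟙_ C) (t : T ⟶ 𝟙_ C),
      IsSubunit s → IsSubunit t → Mono (s ▷ T))
    {X Y Z : C} {f : X ⟶ Y} {g : Y ⟶ Z} (hf : SigmaClass C f) (hg : SigmaClass C g) :
    SigmaClass C (f ≫ g) := by
  obtain ⟨S, s, e, hs, rfl⟩ := iff_exists_restrictionHom.1 hf
  obtain ⟨T, t, e', ht, rfl⟩ := iff_exists_restrictionHom.1 hg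
  have := firm s t hs ht
  refine iff_exists_restrictionHom.2 ⟨S ⊗ T, restrictionHom s T ≫ t,
    e ≪≫ whiskerLeftIso S e' ≪≫ (α_ S T Z).symm, hs.restrictionHom_comp ht, ?_⟩
  calc (e.hom ≫ restrictionHom s Y) ≫ e'.hom ≫ restrictionHom t Z
    _ = e.hom ≫ S ◁ e'.hom ≫ restrictionHom s (T ⊗ Z) ≫ restrictionHom t Z := by
      simp only [Category.assoc, reassoc_of% restrictionHom_naturality s e'.hom]
    _ = e.hom ≫ S ◁ e'.hom ≫ (α_ S T Z).inv ≫
        restrictionHom (restrictionHom s T ≫ t) Z := by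
      rw [restrictionHom_comp_restrictionHom]
    _ = (e ≪≫ whiskerLeftIso S e' ≪≫ (α_ S T Z).symm).hom ≫
        restrictionHom (restrictionHom s T ≫ t) Z := by
      simp only [Iso.trans_hom, whiskerLeftIso_hom, Iso.symm_hom, Category.assoc]

end SigmaClass

/-- Proposition 5.4 of "Tensor topology": in a firm braided monoidal category, the class
`Σ` of identities and restriction morphisms `λ_A ∘ (s ⊗ id_A)` admits a calculus of
right fractions: it contains identities, is closed under composition, satisfies the
right Ore condition (with the stated witnesses), and satisfies right cancellation. -/
theorem stmt12 {C : Type*} [Category C] [MonoidalCategory C] [BraidedCategory C]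
    (firm : ∀ {S T : C} (s : S ⟶ 𝟙_ C) (t : T ⟶ 𝟙_ C),
      IsSubunit s → IsSubunit t → Mono (s ▷ T)) :
    -- contains all identities
    (∀ X : C, SigmaClass C (𝟙 X)) ∧
    -- closed under composition
    (∀ {X Y Z : C} (f : X ⟶ Y) (g : Y ⟶ Z),
      SigmaClass C f → SigmaClass C g → SigmaClass C (f ≫ g)) ∧
    -- right Ore condition, witnessed by `λ_B ∘ (s ⊗ id_B)` and `id_S ⊗ f`
    (∀ {B D S : C} (s : S ⟶ 𝟙_ C), IsSubunit s → ∀ f : B ⟶ D,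
      SigmaClass C ((s ▷ B) ≫ (λ_ B).hom) ∧
      (S ◁ f) ≫ (s ▷ D) ≫ (λ_ D).hom = ((s ▷ B) ≫ (λ_ B).hom) ≫ f) ∧
    -- right cancellation
    (∀ {B D S : C} (s : S ⟶ 𝟙_ C), IsSubunit s → ∀ f' g' : B ⟶ S ⊗ D,
      f' ≫ (s ▷ D) ≫ (λ_ D).hom = g' ≫ (s ▷ D) ≫ (λ_ D).hom →
      ((s ▷ B) ≫ (λ_ B).hom) ≫ f' = ((s ▷ B) ≫ (λ_ B).hom) ≫ g') := by
  refine ⟨fun X => Or.inl ⟨rfl, rfl⟩, fun _ _ => SigmaClass.comp firm, ?_, ?_⟩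
  · intro B D S s hs f
    exact ⟨SigmaClass.of_isSubunit hs B, restrictionHom_naturality s f⟩
  · intro B D S s hs f' g' h
    exact hs.restrictionHom_comp_cancel h
end

section
/- Let C be a firm braided monoidal category and L a complete lattice. There is a bijective correspondence between support data on C valued in L and monotone maps ISub(C) → L: every support datum restricts to a monotone map on subunits, and conversely every monotone map g : ISub(C) → L extends to a unique support datum F via F(f) = ⨅ { g(s) | s a subunit to which f restricts }, and this extension agrees with g on subunits. -/
/-!
For morphisms `s` and `t` into the unit, `s` restricts to `t` exactly when `s` factors through `t`,
because `t ▷ 𝟙_ C` is `t` up to unitors. Hence a subunit `s` is the least subunit to which it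
restricts, and the infimum of a monotone `g` over these is attained at `s` itself. Restriction is
moreover stable under precomposition, so support data do not increase under precomposition, and in
particular are monotone on subunits.
-/

open CategoryTheory MonoidalCategory

/-- A morphism `f : A ⟶ B` restricts to a subunit `s : S ⟶ 𝟙_C` when it factors
through `λ_B ∘ (s ⊗ id_B) : S ⊗ B ⟶ B`. -/
def Restricts {C : Type*} [Category C] [MonoidalCategory C] {A B S : C}
    (f : A ⟶ B) (s : S ⟶ 𝟙_ C) : Prop :=
  ∃ g : A ⟶ S ⊗ B, g ≫ (s ▷ B) ≫ (λ_ B).hom = f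

/-- A support datum on `C` valued in a complete lattice `L`. -/
def IsSupportDatum (C : Type*) [Category C] [MonoidalCategory C] [BraidedCategory C]
    {L : Type*} [CompleteLattice L] (F : ∀ A B : C, (A ⟶ B) → L) : Prop :=
  (∀ {A B A' B' : C} (f : A ⟶ B) (g : A' ⟶ B'),
    (∀ {S : C} (s : S ⟶ 𝟙_ C), IsSubunit s → Restricts g s → Restricts f s) →
    F A B f ≤ F A' B' g) ∧
  (∀ {A B : C} (f : A ⟶ B),
    F A B f =
      sInf {x : L | ∃ (S : C) (s : S ⟶ 𝟙_ C), IsSubunit s ∧ Restricts f s ∧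
        x = F S (𝟙_ C) s})

section Restriction

variable {C : Type*} [Category C] [MonoidalCategory C]

lemma Restricts.precomp {A B D S : C} {f : B ⟶ D} {s : S ⟶ 𝟙_ C} (hf : Restricts f s)
    (h : A ⟶ B) : Restricts (h ≫ f) s := by
  obtain ⟨k, rfl⟩ := hf
  exact ⟨h ≫ k, Category.assoc _ _ _⟩

lemma whiskerRight_unit_comp_leftUnitor_hom {T : C} (t : T ⟶ 𝟙_ C) :
    t ▷ 𝟙_ C ≫ (λ_ (𝟙_ C)).hom = (ρ_ T).hom ≫ t := by
  rw [unitors_equal, rightUnitor_naturality]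

lemma restricts_iff_exists_comp_eq {A T : C} (f : A ⟶ 𝟙_ C) (t : T ⟶ 𝟙_ C) :
    Restricts f t ↔ ∃ k : A ⟶ T, k ≫ t = f := by
  rw [Restricts, whiskerRight_unit_comp_leftUnitor_hom]
  constructor
  · rintro ⟨k, hk⟩
    exact ⟨k ≫ (ρ_ T).hom, by rw [Category.assoc, hk]⟩
  · rintro ⟨k, hk⟩
    exact ⟨k ≫ (ρ_ T).inv, by rw [Category.assoc, Iso.inv_hom_id_assoc, hk]⟩

lemma restricts_self {S : C} (s : S ⟶ 𝟙_ C) : Restricts s s :=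
  (restricts_iff_exists_comp_eq s s).2 ⟨𝟙 S, Category.id_comp s⟩

end Restriction

section Extension

variable {C : Type*} [Category C] [MonoidalCategory C] {L : Type*}

/-- Monotone maps `ISub(C) → L`, encoded as functions on all morphisms into the unit of which only
the values at subunits matter. Monotonicity forces equal values on subunits that represent the same
subobject. -/
def MonotoneOnSubunits [Preorder L] (g : ∀ S : C, (S ⟶ 𝟙_ C) → L) : Prop :=
  ∀ {S T : C} (s : S ⟶ 𝟙_ C) (t : T ⟶ 𝟙_ C), IsSubunit s → IsSubunit t →
    (∃ f : S ⟶ T, f ≫ t = s) → g S s ≤ g T t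

variable [CompleteLattice L]

/-- The extension `f ↦ ⨅ { g s | s a subunit to which f restricts }` to all morphisms of a function
`g` on subunits. -/
def supportExtension (g : ∀ S : C, (S ⟶ 𝟙_ C) → L) (A B : C) (f : A ⟶ B) : L :=
  sInf {x : L | ∃ (S : C) (s : S ⟶ 𝟙_ C), IsSubunit s ∧ Restricts f s ∧ x = g S s}

lemma le_supportExtension_iff {g : ∀ S : C, (S ⟶ 𝟙_ C) → L} {A B : C} {f : A ⟶ B} {a : L} :
    a ≤ supportExtension g A B f ↔
      ∀ (S : C) (s : S ⟶ 𝟙_ C), IsSubunit s → Restricts f s → a ≤ g S s := by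
  rw [supportExtension, le_sInf_iff]
  constructor
  · exact fun h S s hs hf => h _ ⟨S, s, hs, hf, rfl⟩
  · rintro h _ ⟨S, s, hs, hf, rfl⟩
    exact h S s hs hf

lemma supportExtension_le (g : ∀ S : C, (S ⟶ 𝟙_ C) → L) {A B S : C} {f : A ⟶ B}
    {s : S ⟶ 𝟙_ C} (hs : IsSubunit s) (hf : Restricts f s) :
    supportExtension g A B f ≤ g S s :=
  le_supportExtension_iff.1 le_rfl S s hs hf

lemma supportExtension_le_supportExtension (g : ∀ S : C, (S ⟶ 𝟙_ C) → L) {A B A' B' : C}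
    {f : A ⟶ B} {f' : A' ⟶ B'}
    (h : ∀ {S : C} (s : S ⟶ 𝟙_ C), IsSubunit s → Restricts f' s → Restricts f s) :
    supportExtension g A B f ≤ supportExtension g A' B' f' :=
  le_supportExtension_iff.2 fun _ s hs hf' => supportExtension_le g hs (h s hs hf')

lemma supportExtension_congr {g g' : ∀ S : C, (S ⟶ 𝟙_ C) → L}
    (h : ∀ {S : C} (s : S ⟶ 𝟙_ C), IsSubunit s → g S s = g' S s) {A B : C} (f : A ⟶ B) :
    supportExtension g A B f = supportExtension g' A B f :=
  le_antisymm
    (le_supportExtension_iff.2 fun _ s hs hf => (supportExtension_le g hs hf).trans_eq (h s hs))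
    (le_supportExtension_iff.2 fun _ s hs hf =>
      (supportExtension_le g' hs hf).trans_eq (h s hs).symm)

lemma MonotoneOnSubunits.supportExtension_eq {g : ∀ S : C, (S ⟶ 𝟙_ C) → L}
    (hg : MonotoneOnSubunits g) {S : C} {s : S ⟶ 𝟙_ C} (hs : IsSubunit s) :
    supportExtension g S (𝟙_ C) s = g S s :=
  le_antisymm (supportExtension_le g hs (restricts_self s)) <|
    le_supportExtension_iff.2 fun _ t ht hst =>
      hg s t hs ht ((restricts_iff_exists_comp_eq s t).1 hst)

end Extension

section SupportDatum

variable {C : Type*} [Category C] [MonoidalCategory C] [BraidedCategory C]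
  {L : Type*} [CompleteLattice L]

lemma MonotoneOnSubunits.isSupportDatum_supportExtension {g : ∀ S : C, (S ⟶ 𝟙_ C) → L}
    (hg : MonotoneOnSubunits g) : IsSupportDatum C (supportExtension g) :=
  ⟨fun _ _ => supportExtension_le_supportExtension g,
    supportExtension_congr fun _ hs => (hg.supportExtension_eq hs).symm⟩

namespace IsSupportDatum

variable {F : ∀ A B : C, (A ⟶ B) → L}

lemma comp_le (hF : IsSupportDatum C F) {A B D : C} (h : A ⟶ B) (f : B ⟶ D) :
    F A D (h ≫ f) ≤ F B D f :=
  hF.1 _ _ fun _ _ hf => hf.precomp h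

lemma monotoneOnSubunits (hF : IsSupportDatum C F) :
    MonotoneOnSubunits fun S => F S (𝟙_ C) := by
  rintro S T _ t - - ⟨f, rfl⟩
  exact hF.comp_le f t

lemma eq_supportExtension (hF : IsSupportDatum C F) {g : ∀ S : C, (S ⟶ 𝟙_ C) → L}
    (hFg : ∀ {S : C} (s : S ⟶ 𝟙_ C), IsSubunit s → F S (𝟙_ C) s = g S s)
    {A B : C} (f : A ⟶ B) : F A B f = supportExtension g A B f :=
  (hF.2 f).trans (supportExtension_congr hFg f)

end IsSupportDatum

theorem stmt14_general :
    (∀ F : ∀ A B : C, (A ⟶ B) → L, IsSupportDatum C F →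
      MonotoneOnSubunits fun S => F S (𝟙_ C)) ∧
    (∀ g : ∀ S : C, (S ⟶ 𝟙_ C) → L, MonotoneOnSubunits g →
      IsSupportDatum C (supportExtension g) ∧
      (∀ {S : C} (s : S ⟶ 𝟙_ C), IsSubunit s → supportExtension g S (𝟙_ C) s = g S s) ∧
      (∀ F : ∀ A B : C, (A ⟶ B) → L, IsSupportDatum C F →
        (∀ {S : C} (s : S ⟶ 𝟙_ C), IsSubunit s → F S (𝟙_ C) s = g S s) →
        ∀ (A B : C) (f : A ⟶ B), F A B f = supportExtension g A B f)) :=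
  ⟨fun _ hF => hF.monotoneOnSubunits, fun _ hg =>
    ⟨hg.isSupportDatum_supportExtension, fun _ hs => hg.supportExtension_eq hs,
      fun _ hF hFg _ _ f => hF.eq_supportExtension hFg f⟩⟩

end SupportDatum

/-- Proposition 6.3 of "Tensor topology": support data on a firm category `C` valued in
a complete lattice `L` correspond bijectively to monotone maps `ISub(C) → L`: every
support datum restricts to a monotone map on subunits; conversely every monotone map `g`
extends via `F f = ⨅ { g s | f restricts to s }` to a support datum agreeing with `g`
on subunits, and this is the unique such support datum. -/
theorem stmt14 {C : Type*} [Category C] [MonoidalCategory C] [BraidedCategory C]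
    (firm : ∀ {S T : C} (s : S ⟶ 𝟙_ C) (t : T ⟶ 𝟙_ C),
      IsSubunit s → IsSubunit t → Mono (s ▷ T))
    {L : Type*} [CompleteLattice L] :
    -- every support datum restricts to a monotone map on subunits
    (∀ F : ∀ A B : C, (A ⟶ B) → L, IsSupportDatum C F →
      ∀ {S T : C} (s : S ⟶ 𝟙_ C) (t : T ⟶ 𝟙_ C), IsSubunit s → IsSubunit t →
        (∃ f : S ⟶ T, f ≫ t = s) → F S (𝟙_ C) s ≤ F T (𝟙_ C) t) ∧
    -- conversely, every monotone map on subunits extends uniquely to a support datum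
    (∀ g : ∀ S : C, (S ⟶ 𝟙_ C) → L,
      (∀ {S T : C} (s : S ⟶ 𝟙_ C) (t : T ⟶ 𝟙_ C), IsSubunit s → IsSubunit t →
        (∃ f : S ⟶ T, f ≫ t = s) → g S s ≤ g T t) →
      IsSupportDatum C (fun A B f =>
        sInf {x : L | ∃ (S : C) (s : S ⟶ 𝟙_ C), IsSubunit s ∧ Restricts f s ∧
          x = g S s}) ∧
      -- the extension agrees with `g` on subunits
      (∀ {S : C} (s : S ⟶ 𝟙_ C), IsSubunit s →
        sInf {x : L | ∃ (T : C) (t : T ⟶ 𝟙_ C), IsSubunit t ∧ Restricts s t ∧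
          x = g T t} = g S s) ∧
      -- uniqueness
      (∀ F : ∀ A B : C, (A ⟶ B) → L, IsSupportDatum C F →
        (∀ {S : C} (s : S ⟶ 𝟙_ C), IsSubunit s → F S (𝟙_ C) s = g S s) →
        ∀ (A B : C) (f : A ⟶ B),
          F A B f = sInf {x : L | ∃ (S : C) (s : S ⟶ 𝟙_ C), IsSubunit s ∧
            Restricts f s ∧ x = g S s})) :=
  stmt14_general
end
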